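/- Russo's formula for the DaC model: let W be a finite set of vertices of ℤ² and let A be an increasing event that depends only on the colours of the vertices in W. Then for every p ∈ [0,1], the function r ↦ ℙ_{p,r}(A) is differentiable on (0,1) and (d/dr) ℙ_{p,r}(A) = 𝔼_{p,r}[n(A)], where n(A) is the number of p-clusters that are pivotal for A. -/

import Mathlib

/-!
Common definitions for the Divide-and-Colour (DaC) model of
Bálint, Camia and Meester, "Sharp phase transition and critical
behaviour in 2D divide and colour models".

The model is built concretely: a single uniform random variable on `(0,1]`
is decomposed into countably many i.i.d. uniform random variables (via its
binary digits); one family of uniforms drives the Bernoulli(p) bond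
percolation (the edge configuration), and an independent family of uniforms
attaches an independent Bernoulli(r) colour to each bond cluster (the colour
of a cluster is determined by the uniform label of its canonical
representative, the vertex of minimal encoding).  The DaC measure
`ℙ_{p,r}` is the pushforward of Lebesgue measure on `(0,1]` under the map
producing the pair (edge configuration, colour configuration).
-/

open MeasureTheory ENNReal

namespace DaC

/-- Vertices of the lattice. -/
abbrev V : Type := ℤ × ℤ

/-- Square lattice adjacency: Euclidean distance `1`. -/
def SqAdj (u v : V) : Prop := (u.1 - v.1) ^ 2 + (u.2 - v.2) ^ 2 = 1

/-- `*`-adjacency (matching graph of the square lattice):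
Euclidean distance `1` or `√2`. -/
def StarAdj (u v : V) : Prop :=
  (u.1 - v.1) ^ 2 + (u.2 - v.2) ^ 2 = 1 ∨ (u.1 - v.1) ^ 2 + (u.2 - v.2) ^ 2 = 2

/-- Triangular lattice adjacency. -/
def TriAdj (u v : V) : Prop :=
  (u.1 - v.1, u.2 - v.2) ∈
    ({(1, 0), (-1, 0), (0, 1), (0, -1), (1, 1), (-1, -1)} : Set (ℤ × ℤ))

/-- Classical indicator of a proposition, as a boolean. -/
noncomputable def boolOf (P : Prop) : Bool := @decide P (Classical.propDecidable P)

/-- The `n`-th binary digit of a real number `x ∈ (0,1]`. -/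
noncomputable def bit (n : ℕ) (x : ℝ) : Bool := boolOf (⌊x * 2 ^ (n + 1)⌋ % 2 = 1)

/-- A countable family of i.i.d. uniform random variables on `[0,1]`, extracted
from a single uniform sample `x` by splitting its binary digits. -/
noncomputable def unif (i : ℕ) (x : ℝ) : ℝ :=
  ∑' k : ℕ, if bit (Nat.pair i k) x then ((2 : ℝ)⁻¹) ^ (k + 1) else 0

/-- A symmetric encoding of (unordered) pairs of vertices. -/
noncomputable def eIdx (u v : V) : ℕ :=
  min (Encodable.encode (u, v)) (Encodable.encode (v, u))

/-- The uniform label attached to the edge `{u,v}`. -/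
noncomputable def edgeU (u v : V) (x : ℝ) : ℝ := unif (2 * eIdx u v) x

/-- The uniform label attached to the vertex `v` (independent of the edge labels). -/
noncomputable def vtxU (v : V) (x : ℝ) : ℝ := unif (2 * Encodable.encode v + 1) x

/-- Edge configurations: a boolean (open/closed) for each (ordered) pair of
vertices; configurations arising from the model are symmetric and are
supported on pairs of adjacent vertices. -/
abbrev EdgeCfg : Type := V → V → Bool

/-- Colour configurations: a colour (black = `true`, white = `false`) for each vertex. -/
abbrev ColourCfg : Type := V → Bool

/-- Full configurations of the DaC model: an edge configuration together with
a colour configuration. -/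
abbrev Config : Type := EdgeCfg × ColourCfg

/-- The Bernoulli(p) edge configuration determined by the uniform sample `x`,
on the lattice with adjacency `adj`: an edge `{u,v}` of the lattice is open
iff its uniform label is `< p`. -/
noncomputable def edgeCfg (adj : V → V → Prop) (p : ℝ) (x : ℝ) : EdgeCfg :=
  fun u v => boolOf (adj u v) && boolOf (edgeU u v x < p)

/-- Connectivity through open edges of the edge configuration `η`. -/
def Conn (η : EdgeCfg) (u v : V) : Prop :=
  Relation.ReflTransGen (fun a b => η a b = true) u v

/-- The `p`-cluster of the vertex `v`: its connected component in the graph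
retaining only open edges. -/
def pCluster (η : EdgeCfg) (v : V) : Set V := {w | Conn η v w}

/-- Canonical representative of the `p`-cluster of `v`: the vertex of the
cluster with minimal encoding. -/
noncomputable def clusterRep (η : EdgeCfg) (v : V) : V :=
  (Encodable.decode (α := V) (sInf (Encodable.encode '' pCluster η v))).getD v

/-- The colour configuration with parameters `p, r` determined by the uniform
sample `x`: every `p`-cluster is coloured black (with probability `r`)
or white, independently of all other `p`-clusters, according to the uniform
label of its canonical representative. -/
noncomputable def colourCfg (adj : V → V → Prop) (p r : ℝ) (x : ℝ) : ColourCfg :=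
  fun v => boolOf (vtxU (clusterRep (edgeCfg adj p x) v) x < r)

/-- The uniform sample: Lebesgue measure on `(0,1]`. -/
noncomputable def base : Measure ℝ := volume.restrict (Set.Ioc 0 1)

/-- `ν_p`: the product Bernoulli(p) measure on edge configurations of the
lattice with adjacency `adj`. -/
noncomputable def edgeMeasure (adj : V → V → Prop) (p : ℝ) : Measure EdgeCfg :=
  base.map (edgeCfg adj p)

/-- `ℙ_{p,r}`: the DaC measure on pairs (edge configuration, colour
configuration) for the lattice with adjacency `adj`. -/
noncomputable def DaCMeasure (adj : V → V → Prop) (p r : ℝ) : Measure Config :=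
  base.map (fun x => (edgeCfg adj p x, colourCfg adj p r x))

/-- Monochromatic connectivity: `u` and `v` are joined by a path (for the
adjacency `adj`) all of whose vertices have colour `c`. -/
def MonoConn (adj : V → V → Prop) (ξ : ColourCfg) (c : Bool) (u v : V) : Prop :=
  Relation.ReflTransGen (fun a b => adj a b ∧ ξ a = c ∧ ξ b = c) u v

/-- The colour-`c` cluster of `v` (for the adjacency `adj`): empty if `v` does
not have colour `c`, and otherwise the maximal `adj`-connected set of
`c`-coloured vertices containing `v`. -/
def monoCluster (adj : V → V → Prop) (ξ : ColourCfg) (c : Bool) (v : V) : Set V :=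
  {w | ξ v = c ∧ MonoConn adj ξ c v w}

/-- The origin. -/
def origin : V := (0, 0)

/-- The size (cardinality) of a set of vertices, with values in `ℝ≥0∞`. -/
noncomputable def sizeE (S : Set V) : ℝ≥0∞ := S.encard

/-- The probability, under the DaC measure with edge adjacency `eadj` and
parameters `p, r`, that the origin lies in an infinite colour-`c` cluster for
the adjacency `cadj`. -/
noncomputable def percProb (eadj cadj : V → V → Prop) (c : Bool) (p r : ℝ) : ℝ≥0∞ :=
  DaCMeasure eadj p r {ω | (monoCluster cadj ω.2 c origin).Infinite}

/-- `Θ(p,r)` for the square lattice: probability that the origin lies in an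
infinite black `r`-cluster. -/
noncomputable def thetaSq (p r : ℝ) : ℝ≥0∞ := percProb SqAdj SqAdj true p r

/-- `Θ*(p,s)` for the square lattice: the `ℙ_{p,1-s}`-probability that the
origin lies in an infinite white `*`-cluster. -/
noncomputable def thetaStarSq (p s : ℝ) : ℝ≥0∞ := percProb SqAdj StarAdj false p (1 - s)

/-- `Θ(p,r)` for the triangular lattice. -/
noncomputable def thetaTri (p r : ℝ) : ℝ≥0∞ := percProb TriAdj TriAdj true p r

/-- The critical colouring density `r_c(p)` of the square lattice DaC model. -/
noncomputable def rcSq (p : ℝ) : ℝ :=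
  sSup {r : ℝ | r ∈ Set.Icc (0 : ℝ) 1 ∧ thetaSq p r = 0}

/-- The critical colouring density `r_c*(p)` for white `*`-percolation. -/
noncomputable def rcStarSq (p : ℝ) : ℝ :=
  sSup {s : ℝ | s ∈ Set.Icc (0 : ℝ) 1 ∧ thetaStarSq p s = 0}

/-- The critical colouring density `r_c(p)` of the triangular lattice DaC model. -/
noncomputable def rcTri (p : ℝ) : ℝ :=
  sSup {r : ℝ | r ∈ Set.Icc (0 : ℝ) 1 ∧ thetaTri p r = 0}

/-! ### Rectangles and crossings -/

/-- The rectangle `S_{n,m} = ([0,n] × [0,m]) ∩ ℤ²`. -/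
def Rect (n m : ℕ) : Set V :=
  {v | 0 ≤ v.1 ∧ v.1 ≤ (n : ℤ) ∧ 0 ≤ v.2 ∧ v.2 ≤ (m : ℤ)}

/-- The top side of `S_{n,m}`. -/
def TopSide (n m : ℕ) : Set V := {v | v ∈ Rect n m ∧ v.2 = (m : ℤ)}

/-- The bottom side of `S_{n,m}`. -/
def BotSide (n m : ℕ) : Set V := {v | v ∈ Rect n m ∧ v.2 = 0}

/-- The left side of `S_{n,m}`. -/
def LeftSide (n m : ℕ) : Set V := {v | v ∈ Rect n m ∧ v.1 = 0}

/-- The right side of `S_{n,m}`. -/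
def RightSide (n m : ℕ) : Set V := {v | v ∈ Rect n m ∧ v.1 = (n : ℤ)}

/-- There is a path (for the adjacency `adj`), all of whose vertices lie in the
region `R` and satisfy the predicate `good`, from the set `A` to the set `B`. -/
def HasCrossing (adj : V → V → Prop) (good : V → Prop) (R A B : Set V) : Prop :=
  ∃ (k : ℕ) (f : Fin (k + 1) → V),
    (∀ i, f i ∈ R ∧ good (f i)) ∧
    (∀ i : Fin k, adj (f i.castSucc) (f i.succ)) ∧
    f 0 ∈ A ∧ f (Fin.last k) ∈ B

/-- `V^b_{n,m}` as a set of colour configurations: there is a black vertical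
crossing of `S_{n,m}` (for the adjacency `adj`). -/
def VertBC (adj : V → V → Prop) (n m : ℕ) : Set ColourCfg :=
  {ξ | HasCrossing adj (fun v => ξ v = true) (Rect n m) (TopSide n m) (BotSide n m)}

/-- `V^{w*}_{n,m}` as a set of colour configurations: there is a white vertical
`*`-crossing of `S_{n,m}`. -/
def VertWStarC (n m : ℕ) : Set ColourCfg :=
  {ξ | HasCrossing StarAdj (fun v => ξ v = false) (Rect n m) (TopSide n m) (BotSide n m)}

/-- `H^{w*}_{n,m}` as a set of colour configurations: there is a white
horizontal `*`-crossing of `S_{n,m}`. -/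
def HorizWStarC (n m : ℕ) : Set ColourCfg :=
  {ξ | HasCrossing StarAdj (fun v => ξ v = false) (Rect n m) (LeftSide n m) (RightSide n m)}

/-- The event (set of full configurations) determined by a set of colour
configurations. -/
def colourEvent (C : Set ColourCfg) : Set Config := {ω | ω.2 ∈ C}

/-! ### Events depending on colours, increasing events, pivotal clusters -/

/-- The event `A` is defined in terms of the colours of the vertices in `W`. -/
def DependsOnColoursIn (A : Set Config) (W : Set V) : Prop :=
  ∀ ω ω' : Config, (∀ v ∈ W, ω.2 v = ω'.2 v) → (ω ∈ A ↔ ω' ∈ A)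

/-- The event `A` is increasing (for the partial order comparing colour
configurations pointwise, black = `true` above white = `false`). -/
def IncreasingColourEvent (A : Set Config) : Prop :=
  ∀ ω ω' : Config, (∀ v : V, ω.2 v = true → ω'.2 v = true) → ω ∈ A → ω' ∈ A

/-- Flip the colours of the vertices of `C`. -/
noncomputable def flipOn (C : Set V) (ξ : ColourCfg) : ColourCfg :=
  fun v => @ite _ (v ∈ C) (Classical.propDecidable _) (!ξ v) (ξ v)

/-- The set `C` is a pivotal `p`-cluster for the event `A` in the
configuration `ω`: `C` is a `p`-cluster of the edge configuration of `ω`, and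
flipping the colour of (all the vertices of) `C` changes whether the
configuration belongs to `A`. -/
def IsPivotal (A : Set Config) (ω : Config) (C : Set V) : Prop :=
  (∃ v : V, C = pCluster ω.1 v) ∧ ¬ (ω ∈ A ↔ (ω.1, flipOn C ω.2) ∈ A)

/-- `n(A)`: the number of pivotal `p`-clusters for the event `A`, with values
in `ℝ≥0∞`. -/
noncomputable def numPivotal (A : Set Config) (ω : Config) : ℝ≥0∞ :=
  {C : Set V | IsPivotal A ω C}.encard

/-! ### Barriers -/

/-- Connectivity in the square lattice avoiding the edges of `E`. -/
def AvoidConn (E : Set (V × V)) (u v : V) : Prop :=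
  Relation.ReflTransGen (fun a b => SqAdj a b ∧ (a, b) ∉ E ∧ (b, a) ∉ E) u v

/-- `E` is a barrier: a set of edges of the square lattice whose removal
(keeping the end-vertices) separates `ℤ²` into two or more connected
components, exactly one of which is infinite. -/
def IsBarrier (E : Set (V × V)) : Prop :=
  (∀ e ∈ E, SqAdj e.1 e.2) ∧
  (∃ v, {w | AvoidConn E v w}.Infinite) ∧
  (∀ v w, {x | AvoidConn E v x}.Infinite → {x | AvoidConn E w x}.Infinite → AvoidConn E v w) ∧
  (∃ v, {w | AvoidConn E v w}.Finite)

/-- The exterior of a barrier: its unique infinite complementary component. -/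
def barrierExt (E : Set (V × V)) : Set V := {v | {w | AvoidConn E v w}.Infinite}

/-- The interior of a barrier: the union of the finite complementary components. -/
def barrierInt (E : Set (V × V)) : Set V := {v | {w | AvoidConn E v w}.Finite}

/-- The event `A ⊆ EdgeCfg` is increasing (opening edges preserves it). -/
def IncreasingEdgeEvent (A : Set EdgeCfg) : Prop :=
  ∀ η η' : EdgeCfg, (∀ a b : V, η a b = true → η' a b = true) → η ∈ A → η' ∈ A

/-- The event `A ⊆ EdgeCfg` depends only on the states of the edges both of
whose endpoints lie in `W`. -/
def DependsOnEdgesIn (A : Set EdgeCfg) (W : Set V) : Prop :=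
  ∀ η η' : EdgeCfg, (∀ a b : V, a ∈ W → b ∈ W → η a b = η' a b) → (η ∈ A ↔ η' ∈ A)

/-! ### Translations -/

/-- Translation of configurations by the vector `u`. -/
def shift (u : V) (ω : Config) : Config :=
  (fun a b => ω.1 (a + u) (b + u), fun a => ω.2 (a + u))

end DaC

open MeasureTheory ENNReal
namespace DaC

lemma boolOf_eq_true {P : Prop} : boolOf P = true ↔ P := by simp [boolOf]

lemma measurable_boolOf {α : Type*} [MeasurableSpace α] {P : α → Prop}
    (h : MeasurableSet {a | P a}) : Measurable (fun a => boolOf (P a)) := by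
  refine measurable_to_bool ?_
  have : (fun a => boolOf (P a)) ⁻¹' {true} = {a | P a} := by
    ext a; simp [boolOf_eq_true]
  rw [this]; exact h

lemma measurable_bit (n : ℕ) : Measurable (bit n) := by
  unfold bit
  refine measurable_boolOf ?_
  have h1 : Measurable (fun x : ℝ => ⌊x * 2 ^ (n + 1)⌋) := by fun_prop
  exact h1 (MeasurableSet.of_discrete (s := {k : ℤ | k % 2 = 1}))

lemma bit_add_one (n : ℕ) (x : ℝ) : bit n (x + 1) = bit n x := by
  unfold bit
  have : (x + 1) * 2 ^ (n + 1) = x * 2 ^ (n + 1) + ((2 ^ (n + 1) : ℤ) : ℝ) := by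
    push_cast; ring
  rw [this, Int.floor_add_intCast]
  congr 1
  rw [pow_succ (2:ℤ) n, Int.add_mul_emod_self_right]

lemma bit_succ (n : ℕ) (x : ℝ) : bit (n + 1) x = bit n (x * 2) := by
  unfold bit
  rw [pow_succ 2 (n+1)]
  congr 4
  ring

instance : IsProbabilityMeasure base := ⟨by simp [base]⟩

lemma base_eq : base = volume.restrict (Set.Ico 0 1) :=
  Measure.restrict_congr_set Ico_ae_eq_Ioc.symm

lemma base_apply {S : Set ℝ} (hS : MeasurableSet S) : base S = volume (Set.Ico 0 1 ∩ S) := by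
  rw [base_eq, Measure.restrict_apply hS, Set.inter_comm]

lemma bit_zero_of_lt {x : ℝ} (h0 : 0 ≤ x) (h1 : x < 1 / 2) : bit 0 x = false := by
  have : ⌊x * 2 ^ (0 + 1)⌋ = 0 := by
    rw [Int.floor_eq_iff]; constructor <;> norm_num <;> linarith
  unfold bit boolOf
  simp only [this]; simp

lemma bit_zero_of_ge {x : ℝ} (h0 : 1 / 2 ≤ x) (h1 : x < 1) : bit 0 x = true := by
  have : ⌊x * 2 ^ (0 + 1)⌋ = 1 := by
    rw [Int.floor_eq_iff]; constructor <;> norm_num <;> linarith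
  unfold bit boolOf
  simp only [this]; simp

lemma half_false {S : Set ℝ} (hS : MeasurableSet S) :
    base {x | bit 0 x = false ∧ x * 2 ∈ S} = ENNReal.ofReal (1/2) * base S := by
  have hm : MeasurableSet {x : ℝ | bit 0 x = false ∧ x * 2 ∈ S} :=
    (measurable_bit 0 (measurableSet_singleton false)).inter
      ((measurable_id.mul_const (2:ℝ)) hS)
  rw [base_apply hm, base_apply hS]
  have : Set.Ico (0:ℝ) 1 ∩ {x : ℝ | bit 0 x = false ∧ x * 2 ∈ S}
      = (· * (2:ℝ)) ⁻¹' (Set.Ico 0 1 ∩ S) := by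
    ext x
    simp only [Set.mem_inter_iff, Set.mem_Ico, Set.mem_ofPred_eq, Set.mem_preimage]
    constructor
    · rintro ⟨⟨h0, h1⟩, hb, hs⟩
      refine ⟨⟨by linarith, ?_⟩, hs⟩
      by_contra h
      rw [bit_zero_of_ge (by linarith) h1] at hb
      simp at hb
    · rintro ⟨⟨h0, h1⟩, hs⟩
      exact ⟨⟨by linarith, by linarith⟩, bit_zero_of_lt (by linarith) (by linarith), hs⟩
  rw [this, Real.volume_preimage_mul_right two_ne_zero]
  congr 2
  norm_num

lemma half_true {S : Set ℝ} (hS : MeasurableSet S) (hper : ∀ x, x + 1 ∈ S ↔ x ∈ S) :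
    base {x | bit 0 x = true ∧ x * 2 ∈ S} = ENNReal.ofReal (1/2) * base S := by
  have hm : MeasurableSet {x : ℝ | bit 0 x = true ∧ x * 2 ∈ S} :=
    (measurable_bit 0 (measurableSet_singleton true)).inter
      ((measurable_id.mul_const (2:ℝ)) hS)
  rw [base_apply hm, base_apply hS]
  have : Set.Ico (0:ℝ) 1 ∩ {x : ℝ | bit 0 x = true ∧ x * 2 ∈ S}
      = (· * (2:ℝ)) ⁻¹' (Set.Ico 1 2 ∩ S) := by
    ext x
    simp only [Set.mem_inter_iff, Set.mem_Ico, Set.mem_ofPred_eq, Set.mem_preimage]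
    constructor
    · rintro ⟨⟨h0, h1⟩, hb, hs⟩
      refine ⟨⟨?_, by linarith⟩, hs⟩
      by_contra h
      rw [bit_zero_of_lt h0 (by linarith)] at hb
      simp at hb
    · rintro ⟨⟨h0, h1⟩, hs⟩
      exact ⟨⟨by linarith, by linarith⟩, bit_zero_of_ge (by linarith) (by linarith), hs⟩
  have h2 : Set.Ico (0:ℝ) 1 ∩ S = (· + (1:ℝ)) ⁻¹' (Set.Ico 1 2 ∩ S) := by
    ext x
    simp only [Set.mem_inter_iff, Set.mem_Ico, Set.mem_preimage, hper]
    constructor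
    · rintro ⟨⟨h0, h1⟩, hs⟩
      exact ⟨⟨by linarith, by linarith⟩, hs⟩
    · rintro ⟨⟨h0, h1⟩, hs⟩
      exact ⟨⟨by linarith, by linarith⟩, hs⟩
  rw [this, h2, Real.volume_preimage_mul_right two_ne_zero, measure_preimage_add_right]
  congr 2
  norm_num

/-- The law of a single bit. -/
noncomputable def coin : Measure Bool := base.map (bit 0)

instance : IsProbabilityMeasure coin :=
  Measure.isProbabilityMeasure_map (measurable_bit 0).aemeasurable

open Classical in
lemma half_set {S : Set ℝ} (hS : MeasurableSet S) (hper : ∀ x, x + 1 ∈ S ↔ x ∈ S) (B : Set Bool) :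
    base {x | bit 0 x ∈ B ∧ x * 2 ∈ S} =
      ((if true ∈ B then ENNReal.ofReal (1/2) else 0) +
        (if false ∈ B then ENNReal.ofReal (1/2) else 0)) * base S := by
  rw [← measure_inter_add_sdiff _ (measurable_bit 0 (measurableSet_singleton true)), add_mul]
  congr 1
  · by_cases h : true ∈ B
    · rw [if_pos h, ← half_true hS hper]
      congr 1; ext x; simp only [Set.mem_inter_iff, Set.mem_ofPred_eq, Set.mem_preimage,
        Set.mem_singleton_iff]
      grind
    · rw [if_neg h, zero_mul]
      convert measure_empty (μ := base)
      ext x; simp only [Set.mem_inter_iff, Set.mem_ofPred_eq, Set.mem_preimage,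
        Set.mem_singleton_iff, Set.mem_empty_iff_false]
      grind
  · by_cases h : false ∈ B
    · rw [if_pos h, ← half_false hS]
      congr 1; ext x; simp only [Set.mem_sdiff, Set.mem_ofPred_eq, Set.mem_preimage,
        Set.mem_singleton_iff]
      cases bit 0 x <;> grind
    · rw [if_neg h, zero_mul]
      convert measure_empty (μ := base)
      ext x; simp only [Set.mem_sdiff, Set.mem_ofPred_eq, Set.mem_preimage,
        Set.mem_singleton_iff, Set.mem_empty_iff_false]
      cases bit 0 x <;> grind

lemma half_coin {S : Set ℝ} (hS : MeasurableSet S) (hper : ∀ x, x + 1 ∈ S ↔ x ∈ S) (B : Set Bool) :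
    base {x | bit 0 x ∈ B ∧ x * 2 ∈ S} = coin B * base S := by
  have h := half_set MeasurableSet.univ (by simp) B
  rw [half_set hS hper, coin, Measure.map_apply (measurable_bit 0) MeasurableSet.of_discrete]
  simp only [Set.mem_univ, and_true, measure_univ, mul_one] at h
  rw [← h]; rfl

lemma base_bits (n : ℕ) : ∀ t : ℕ → Set Bool,
    base {x | ∀ i < n, bit i x ∈ t i} = ∏ i ∈ Finset.range n, coin (t i) := by
  induction n with
  | zero => intro t; simp
  | succ n ih =>
    intro t
    rw [Finset.prod_range_succ', ← ih (fun i => t (i+1)), mul_comm, ← half_coin]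
    · congr 1; ext x
      simp only [Set.mem_ofPred_eq, Nat.forall_lt_succ_left, bit_succ]
    · have : {x | ∀ i < n, bit i x ∈ t (i+1)} = ⋂ i, ⋂ (_ : i < n), bit i ⁻¹' t (i+1) := by
        ext x; simp
      rw [this]
      exact MeasurableSet.iInter fun i => MeasurableSet.iInter fun _ =>
        measurable_bit i MeasurableSet.of_discrete
    · intro x; simp [bit_add_one]

lemma map_bits : base.map (fun x n => bit n x) = Measure.infinitePi (fun _ : ℕ => coin) := by
  have hm : Measurable (fun x n => bit n x) := measurable_pi_iff.2 measurable_bit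
  refine Measure.eq_infinitePi _ fun s t ht => ?_
  classical
  rw [Measure.map_apply hm (.pi s.countable_toSet fun i _ => ht i)]
  obtain ⟨n, hn⟩ : ∃ n, s ⊆ Finset.range n := ⟨s.sup id + 1, fun i hi => by
    simpa [Nat.lt_succ_iff] using Finset.le_sup (f := id) hi⟩
  have h := base_bits n (fun i => if i ∈ s then t i else Set.univ)
  have h2 : ∏ i ∈ s, coin (t i) =
      ∏ i ∈ Finset.range n, coin (if i ∈ s then t i else Set.univ) := by
    rw [← Finset.prod_subset hn (f := fun i => coin (if i ∈ s then t i else Set.univ))]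
    · exact Finset.prod_congr rfl fun i hi => by simp [hi]
    · intro i _ hi; rw [if_neg hi, measure_univ]
  rw [h2, ← h]
  congr 1; ext x
  simp only [Set.mem_preimage, Set.mem_pi, Set.mem_ofPred_eq, Finset.mem_coe]
  constructor
  · intro h i _; split_ifs with hi; exacts [h i hi, trivial]
  · intro h i hi; simpa [hi] using h i (by simpa using hn hi)

/-- binary expansion -/
noncomputable def ofBits (b : ℕ → Bool) : ℝ :=
  ∑' k : ℕ, if b k then ((2 : ℝ)⁻¹) ^ (k + 1) else 0

lemma summable_ofBits (b : ℕ → Bool) :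
    Summable (fun k : ℕ => if b k then ((2 : ℝ)⁻¹) ^ (k + 1) else 0) := by
  refine Summable.of_nonneg_of_le (fun k => ?_) (fun k => ?_)
    ((summable_geometric_of_lt_one (r := (2:ℝ)⁻¹) (by norm_num) (by norm_num)))
  · split_ifs <;> positivity
  · split_ifs
    · exact pow_le_pow_of_le_one (by norm_num) (by norm_num) (by omega)
    · positivity

lemma measurable_ofBits : Measurable ofBits := by
  refine measurable_of_tendsto_metrizable
    (f := fun n (b : ℕ → Bool) => ∑ k ∈ Finset.range n, if b k then ((2 : ℝ)⁻¹) ^ (k + 1) else 0)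
    (fun n => ?_) ?_
  · refine Finset.measurable_sum _ fun k _ => ?_
    exact (Measurable.of_discrete (f := fun c : Bool => if c then ((2 : ℝ)⁻¹) ^ (k + 1) else 0)).comp
      (measurable_pi_apply k)
  · rw [tendsto_pi_nhds]
    intro b
    exact (summable_ofBits b).hasSum.tendsto_sum_nat

lemma floor_two_mul_bit (n : ℕ) (x : ℝ) :
    (⌊x * 2 ^ (n + 1)⌋ : ℝ) = 2 * ⌊x * 2 ^ n⌋ + (if bit n x then 1 else 0) := by
  have h1 : ⌊x * 2 ^ n⌋ = ⌊x * 2 ^ (n + 1)⌋ / 2 := by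
    have := Int.floor_div_natCast (x * 2 ^ (n+1)) 2
    have h := this.symm
    push_cast at h
    rw [h]
    congr 1; rw [pow_succ]; ring
  have h2 : (if bit n x then (1:ℤ) else 0) = ⌊x * 2 ^ (n + 1)⌋ % 2 := by
    have hb : bit n x = true ↔ ⌊x * 2 ^ (n + 1)⌋ % 2 = 1 := boolOf_eq_true
    split_ifs with h
    · rw [hb] at h; omega
    · rw [hb] at h; omega
  have h3 : ⌊x * 2 ^ (n + 1)⌋ = 2 * ⌊x * 2 ^ n⌋ + (if bit n x then 1 else 0) := by
    rw [h1, h2]; omega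
  exact_mod_cast h3

lemma ofBits_bits {x : ℝ} (h0 : 0 ≤ x) (h1 : x < 1) : ofBits (fun n => bit n x) = x := by
  have hs := (summable_ofBits (fun n => bit n x)).hasSum.tendsto_sum_nat
  refine tendsto_nhds_unique hs ?_
  have hsum : ∀ n, (∑ k ∈ Finset.range n, if bit k x then ((2 : ℝ)⁻¹) ^ (k + 1) else 0)
      = ⌊x * 2 ^ n⌋ / 2 ^ n := by
    intro n
    induction n with
    | zero => 
      have : ⌊x⌋ = 0 := by rw [Int.floor_eq_iff]; constructor <;> norm_num <;> linarith
      simp [this]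
    | succ n ih =>
      rw [Finset.sum_range_succ, ih, floor_two_mul_bit]
      have hp : (2:ℝ) ^ n ≠ 0 := by positivity
      rw [inv_pow, pow_succ]
      split_ifs <;> field_simp <;> ring
  simp_rw [hsum]
  have hlim : Filter.Tendsto (fun n : ℕ => x - ((1:ℝ)/2) ^ n) Filter.atTop (nhds x) := by
    simpa using (_root_.tendsto_pow_atTop_nhds_zero_of_lt_one (r := (1:ℝ)/2) (by norm_num) (by norm_num)).const_sub x
  refine tendsto_of_tendsto_of_tendsto_of_le_of_le hlim tendsto_const_nhds ?_ ?_
  · intro n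
    have := (Int.sub_one_lt_floor (x * 2 ^ n)).le
    have hp : (0:ℝ) < 2 ^ n := by positivity
    simp only
    rw [le_div_iff₀ hp, sub_mul, ← mul_pow]
    norm_num; linarith
  · intro n
    have := Int.floor_le (x * 2 ^ n)
    have hp : (0:ℝ) < 2 ^ n := by positivity
    simp only
    rw [div_le_iff₀ hp]; exact this

lemma map_ofBits : (Measure.infinitePi (fun _ : ℕ => coin)).map ofBits = base := by
  have hm : Measurable (fun x n => bit n x) := measurable_pi_iff.2 measurable_bit
  rw [← map_bits, Measure.map_map measurable_ofBits hm]
  have : (ofBits ∘ fun x n => bit n x) =ᵐ[base] id := by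
    rw [base_eq]
    filter_upwards [ae_restrict_mem measurableSet_Ico] with x hx
    exact ofBits_bits hx.1 hx.2
  rw [Measure.map_congr this, Measure.map_id]

lemma map_unif : base.map (fun x i => unif i x) = Measure.infinitePi (fun _ : ℕ => base) := by
  have hm : Measurable (fun x n => bit n x) := measurable_pi_iff.2 measurable_bit
  have e1 := Measure.map_infinitePi_infinitePi_of_inj (P := fun _ : ℕ => coin)
    (f := fun q : ℕ × ℕ => Nat.pair q.1 q.2) Nat.pairEquiv.injective
  have e2 := Measure.infinitePi_map_curry (fun (_ _ : ℕ) => coin)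
  have e3 := Measure.infinitePi_map_pi (fun _ : ℕ => Measure.infinitePi (fun _ : ℕ => coin))
    (f := fun _ => ofBits) (fun _ => measurable_ofBits)
  simp only [map_ofBits] at e3
  rw [← e3, ← e2, ← e1, ← map_bits, Measure.map_map, Measure.map_map, Measure.map_map]
  · rfl
  all_goals have h4 := measurable_ofBits
  all_goals have h5 : Measurable (fun (x : ℕ → ℕ → Bool) i => ofBits (x i)) :=
    measurable_pi_iff.2 fun i => measurable_ofBits.comp (measurable_pi_apply i)
  all_goals have h6 := h5.comp (MeasurableEquiv.curry ℕ ℕ Bool).measurable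
  all_goals first | assumption | fun_prop

lemma measurable_unif (i : ℕ) : Measurable (unif i) :=
  measurable_ofBits.comp (measurable_pi_iff.2 fun k => measurable_bit (Nat.pair i k))

lemma map_unif_one (i : ℕ) : base.map (unif i) = base := by
  have h := Measure.infinitePi_map_eval (fun _ : ℕ => base) i
  rw [← map_unif, Measure.map_map (measurable_pi_apply i) (measurable_pi_iff.2 measurable_unif)] at h
  exact h

lemma iIndepFun_unif : ProbabilityTheory.iIndepFun unif base := by
  rw [ProbabilityTheory.iIndepFun_iff_map_fun_eq_infinitePi_map measurable_unif, map_unif]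
  simp_rw [map_unif_one]

/-- edges and vertex labels -/
lemma map_edge_vtx (p : ℝ) : Measurable (edgeCfg SqAdj p) ∧
    base.map (fun x => (edgeCfg SqAdj p x, fun v => vtxU v x)) =
      (base.map (edgeCfg SqAdj p)).prod (Measure.infinitePi (fun _ : V => base)) := by
  have hE : ∀ (m : MeasurableSpace ℝ), (∀ i, Measurable[m, Real.measurableSpace] (unif (2 * i))) →
      Measurable[m] (edgeCfg SqAdj p) := by
    intro m hm
    refine measurable_pi_iff.2 fun u => measurable_pi_iff.2 fun v => ?_
    have h1 : Measurable[m] (fun x => boolOf (edgeU u v x < p)) := by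
      refine measurable_boolOf ?_
      exact (hm (eIdx u v)) (@measurableSet_Iio ℝ _ Real.measurableSpace _ _ _ _)
    exact (Measurable.of_discrete (f := fun c : Bool => boolOf (SqAdj u v) && c)).comp h1
  have hY : ∀ (m : MeasurableSpace ℝ), (∀ i, Measurable[m, Real.measurableSpace] (unif (2 * i + 1))) →
      @Measurable _ _ m (@MeasurableSpace.pi V (fun _ => ℝ) (fun _ => Real.measurableSpace)) (fun x (v : V) => vtxU v x) := by
    intro m hm
    exact (@measurable_pi_iff _ _ _ m (fun _ => Real.measurableSpace) _).2 fun v => hm _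
  have hEm := hE Real.measurableSpace fun i => measurable_unif _
  have hYm := hY Real.measurableSpace fun i => measurable_unif _
  refine ⟨hEm, ?_⟩
  have hind : ProbabilityTheory.IndepFun (edgeCfg SqAdj p) (fun x (v : V) => vtxU v x) base := by
    have h := ProbabilityTheory.indep_iSup_of_disjoint (S := {i | Even i}) (T := {i | ¬ Even i})
      (fun i => (measurable_unif i).comap_le)
      ((ProbabilityTheory.iIndepFun_iff_iIndep _ _ _).1 iIndepFun_unif)
      (disjoint_compl_right)
    rw [ProbabilityTheory.IndepFun_iff_Indep]
    refine ProbabilityTheory.indep_of_indep_of_le_left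
      (ProbabilityTheory.indep_of_indep_of_le_right h ?_) ?_
    · refine Measurable.comap_le (hY _ fun i => ?_)
      refine Measurable.mono (comap_measurable _) ?_ le_rfl
      exact le_iSup₂_of_le (2 * i + 1) (by simp) le_rfl
    · refine Measurable.comap_le (hE _ fun i => ?_)
      refine Measurable.mono (comap_measurable _) ?_ le_rfl
      exact le_iSup₂_of_le (2 * i) (by simp) le_rfl
  rw [hind.map_prod_eq_prod_map_map hEm.aemeasurable hYm.aemeasurable]
  congr 1
  have e1 := Measure.map_infinitePi_infinitePi_of_inj (P := fun _ : ℕ => base)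
    (f := fun v : V => 2 * Encodable.encode v + 1) (fun a b h => by
      simpa using h)
  rw [← e1, ← map_unif, Measure.map_map (by fun_prop) (measurable_pi_iff.2 measurable_unif)]
  rfl

end DaC

open MeasureTheory ENNReal
namespace DaC

/-- Bernoulli weight -/
noncomputable def wt (r : ℝ) (b : Bool) : ℝ := if b then r else 1 - r

/-- sign -/
noncomputable def sg (b : Bool) : ℝ := if b then 1 else -1

lemma hasDerivAt_wt (r : ℝ) (b : Bool) : HasDerivAt (fun s => wt s b) (sg b) r := by
  cases b
  · simpa [wt, sg] using (hasDerivAt_id r).const_sub 1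
  · simpa [wt, sg] using hasDerivAt_id' r

/-- flip one site -/
def flip1 {ι : Type*} [DecidableEq ι] (v : ι) (c : ι → Bool) : ι → Bool :=
  Function.update c v (!c v)

lemma flip1_flip1 {ι : Type*} [DecidableEq ι] (v : ι) (c : ι → Bool) :
    flip1 v (flip1 v c) = c := by
  funext u
  by_cases h : u = v
  · subst h; simp [flip1]
  · simp [flip1, h]

open Classical in
lemma russo_site {ι : Type*} [Fintype ι] [DecidableEq ι] (P : (ι → Bool) → Prop)
    (hP : ∀ c c' : ι → Bool, (∀ v, c v = true → c' v = true) → P c → P c') (v : ι) (r : ℝ) :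
    ∑ c : ι → Bool, (if P c then (1:ℝ) else 0) * (sg (c v) * ∏ u ∈ Finset.univ.erase v, wt r (c u))
    = ∑ c : ι → Bool, (if ¬ (P c ↔ P (flip1 v c)) then (1:ℝ) else 0) * ∏ u, wt r (c u) := by
  have hprod : ∀ c : ι → Bool, ∏ u, wt r (c u) =
      wt r (c v) * ∏ u ∈ Finset.univ.erase v, wt r (c u) := fun c =>
    (Finset.mul_prod_erase _ _ (Finset.mem_univ v)).symm
  have hW : ∀ c : ι → Bool, ∏ u ∈ Finset.univ.erase v, wt r (flip1 v c u) =
      ∏ u ∈ Finset.univ.erase v, wt r (c u) := fun c =>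
    Finset.prod_congr rfl fun u hu => by simp [flip1, Finset.ne_of_mem_erase hu]
  have hv : ∀ c : ι → Bool, flip1 v c v = !c v := fun c => by simp [flip1]
  have hpiv : ∀ c : ι → Bool, (if ¬ (P c ↔ P (flip1 v c)) then (1:ℝ) else 0) =
      sg (c v) * ((if P c then (1:ℝ) else 0) - (if P (flip1 v c) then (1:ℝ) else 0)) := by
    intro c
    cases hc : c v
    · have h1 : P c → P (flip1 v c) := hP _ _ fun u hu => by
        by_cases h : u = v
        · subst h; simp [flip1, hc]
        · simpa [flip1, h] using hu
      by_cases hA : P c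
      · simp [hA, h1 hA]
      · by_cases hB : P (flip1 v c) <;> simp [hA, hB, sg]
    · have h1 : P (flip1 v c) → P c := hP _ _ fun u hu => by
        by_cases h : u = v
        · subst h; exact hc
        · simpa [flip1, h] using hu
      by_cases hA : P (flip1 v c)
      · simp [hA, h1 hA]
      · by_cases hB : P c <;> simp [hA, hB, sg]
  have hswap : ∑ c : ι → Bool, sg (c v) * (if P (flip1 v c) then (1:ℝ) else 0) * ∏ u, wt r (c u)
      = ∑ c : ι → Bool, -(sg (c v) * (if P c then (1:ℝ) else 0) *
          (wt r (!c v) * ∏ u ∈ Finset.univ.erase v, wt r (c u))) := by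
    have hinv : Function.Involutive (flip1 (ι := ι) v) := flip1_flip1 v
    rw [← Equiv.sum_comp hinv.toPerm]
    refine Finset.sum_congr rfl fun c _ => ?_
    simp only [Function.Involutive.coe_toPerm, flip1_flip1, hprod, hW, hv]
    by_cases hPc : P c <;> cases c v <;> simp [sg, hPc]
  simp_rw [hpiv]
  have : ∀ c : ι → Bool, sg (c v) * ((if P c then (1:ℝ) else 0) -
      (if P (flip1 v c) then (1:ℝ) else 0)) * ∏ u, wt r (c u) =
      sg (c v) * (if P c then (1:ℝ) else 0) * ∏ u, wt r (c u) -
      sg (c v) * (if P (flip1 v c) then (1:ℝ) else 0) * ∏ u, wt r (c u) := fun c => by ring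
  simp_rw [this]
  rw [Finset.sum_sub_distrib, hswap, ← Finset.sum_sub_distrib]
  refine Finset.sum_congr rfl fun c _ => ?_
  rw [hprod]
  have hw : wt r (c v) = 1 - wt r (!c v) := by cases c v <;> simp [wt]
  rw [hw]; ring

open Classical in
lemma russo_finite {ι : Type*} [Fintype ι] [DecidableEq ι] (P : (ι → Bool) → Prop)
    (hP : ∀ c c' : ι → Bool, (∀ v, c v = true → c' v = true) → P c → P c') (r : ℝ) :
    HasDerivAt (fun s => ∑ c : ι → Bool, (if P c then (1:ℝ) else 0) * ∏ u, wt s (c u))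
      (∑ v, ∑ c : ι → Bool, (if ¬ (P c ↔ P (flip1 v c)) then (1:ℝ) else 0) * ∏ u, wt r (c u)) r := by
  simp_rw [← russo_site P hP]
  rw [Finset.sum_comm]
  refine HasDerivAt.fun_sum fun c _ => ?_
  rw [← Finset.mul_sum]
  refine HasDerivAt.const_mul _ ?_
  have := HasDerivAt.fun_finsetProd (u := Finset.univ) (f := fun (u : ι) s => wt s (c u))
    (f' := fun u => sg (c u)) (x := r) (fun u _ => hasDerivAt_wt r (c u))
  simpa [mul_comm] using this

/-- vertex label law -/
noncomputable def lam : Measure (V → ℝ) := Measure.infinitePi (fun _ : V => base)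

instance : IsProbabilityMeasure lam := by unfold lam; infer_instance

/-- thresholding -/
noncomputable def thr (r : ℝ) (y : V → ℝ) : V → Bool := fun v => boolOf (y v < r)

lemma measurable_thr (r : ℝ) : Measurable (thr r) :=
  measurable_pi_iff.2 fun v => measurable_boolOf ((measurable_pi_apply v) measurableSet_Iio)

lemma base_Iio {r : ℝ} (h0 : 0 ≤ r) (h1 : r ≤ 1) : base (Set.Iio r) = ENNReal.ofReal r := by
  rw [base_apply measurableSet_Iio]
  have : Set.Ico (0:ℝ) 1 ∩ Set.Iio r = Set.Ico 0 r := by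
    ext x; simp; intro _ h; linarith
  simp [this]

lemma base_wt {r : ℝ} (h0 : 0 ≤ r) (h1 : r ≤ 1) (b : Bool) :
    base.real {x | boolOf (x < r) = b} = wt r b := by
  cases b
  · have : {x | boolOf (x < r) = false} = (Set.Iio r)ᶜ := by ext x; simp [boolOf]
    rw [this, measureReal_compl measurableSet_Iio]
    simp [Measure.real, base_Iio h0 h1, wt, h0]
  · have : {x | boolOf (x < r) = true} = Set.Iio r := by ext x; simp [boolOf]
    rw [this]
    simp [Measure.real, base_Iio h0 h1, wt, h0]

lemma lam_box {r : ℝ} (h0 : 0 ≤ r) (h1 : r ≤ 1) (R : Finset V) (c : R → Bool) :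
    lam.real ((fun y (v : R) => thr r y v) ⁻¹' {c}) = ∏ v, wt r (c v) := by
  classical
  have hset : ((fun y (v : R) => thr r y v) ⁻¹' {c}) =
      Set.pi (R : Set V) (fun v => {x : ℝ | boolOf (x < r) = if h : v ∈ R then c ⟨v, h⟩ else false}) := by
    ext y
    simp only [Set.mem_preimage, Set.mem_singleton_iff, funext_iff, Set.mem_pi, Finset.mem_coe,
      Set.mem_ofPred_eq, thr, Subtype.forall]
    refine forall₂_congr fun v hv => by simp [hv]
  have hm : ∀ b : Bool, MeasurableSet {x : ℝ | boolOf (x < r) = b} := fun b =>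
    (measurable_boolOf (P := fun x => x < r) measurableSet_Iio) (measurableSet_singleton b)
  rw [hset, Measure.real, lam, Measure.infinitePi_pi _ (fun i _ => hm _), ENNReal.toReal_prod,
    ← Finset.prod_coe_sort]
  refine Finset.prod_congr rfl fun v _ => ?_
  rw [← base_wt h0 h1]
  simp [Measure.real]

/-- `B` depends on sites in `R` only. -/
def DepOn (B : Set (V → Bool)) (R : Finset V) : Prop :=
  ∀ z zz : V → Bool, (∀ v ∈ R, z v = zz v) → (z ∈ B ↔ zz ∈ B)

/-- extension by white -/
def ext0 (R : Finset V) (c : R → Bool) : V → Bool := fun v => if h : v ∈ R then c ⟨v, h⟩ else false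

open Classical in
lemma lam_sum {r : ℝ} (h0 : 0 ≤ r) (h1 : r ≤ 1) (R : Finset V) (B : Set (V → Bool))
    (hB : DepOn B R) : lam.real {y | thr r y ∈ B} =
      ∑ c : R → Bool, (if ext0 R c ∈ B then (1:ℝ) else 0) * ∏ v, wt r (c v) := by
  have hset : {y | thr r y ∈ B} = (fun y (v : R) => thr r y v) ⁻¹'
      (↑(Finset.univ.filter fun c : R → Bool => ext0 R c ∈ B) : Set (R → Bool)) := by
    ext y
    simp only [Set.mem_ofPred_eq, Finset.coe_filter, Finset.mem_univ, true_and, Set.mem_preimage]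
    exact hB _ _ fun v hv => by simp [ext0, hv]
  have hm : Measurable (fun y (v : R) => thr r y v) :=
    measurable_pi_iff.2 fun v => (measurable_pi_apply _).comp (measurable_thr r)
  rw [hset, ← sum_measureReal_preimage_singleton _ (fun c _ => hm (measurableSet_singleton c)),
    Finset.sum_filter]
  refine Finset.sum_congr rfl fun c _ => ?_
  rw [lam_box h0 h1]
  split_ifs <;> simp

/-- pivotal event -/
def Piv (B : Set (V → Bool)) (v : V) : Set (V → Bool) := {z | ¬ (z ∈ B ↔ flip1 v z ∈ B)}

lemma Piv_dep {B : Set (V → Bool)} {R : Finset V} (hB : DepOn B R) (v : V) : DepOn (Piv B v) R := by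
  intro z z' h
  have h2 : flip1 v z ∈ B ↔ flip1 v z' ∈ B := hB _ _ fun u hu => by
    by_cases huv : u = v
    · subst huv; simp [flip1, h _ hu]
    · simp [flip1, huv, h _ hu]
  simp only [Piv, Set.mem_ofPred_eq, hB z z' h, h2]

lemma Piv_empty {B : Set (V → Bool)} {R : Finset V} (hB : DepOn B R) {v : V} (hv : v ∉ R) :
    Piv B v = ∅ := by
  ext z
  simp only [Piv, Set.mem_ofPred_eq, Set.mem_empty_iff_false, iff_false, not_not]
  refine hB _ _ fun u hu => ?_
  have : u ≠ v := fun h => hv (h ▸ hu)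
  simp [flip1, this]

lemma russo_lam {r : ℝ} (hr : r ∈ Set.Ioo (0:ℝ) 1) (R : Finset V) (B : Set (V → Bool))
    (hB : DepOn B R) (hinc : ∀ z z' : V → Bool, (∀ v, z v = true → z' v = true) → z ∈ B → z' ∈ B) :
    HasDerivAt (fun s => lam.real {y | thr s y ∈ B}) (∑ v ∈ R, lam.real {y | thr r y ∈ Piv B v}) r := by
  classical
  have h := russo_finite (fun c : R → Bool => ext0 R c ∈ B) (fun c c' hc hm => hinc _ _ (fun v => by
    simp only [ext0]; split_ifs with h
    · exact hc _
    · simp) hm) r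
  have hval : ∑ v ∈ R, lam.real {y | thr r y ∈ Piv B v} = 
      (∑ v, ∑ c : R → Bool, (if ¬ (ext0 R c ∈ B ↔ ext0 R (flip1 v c) ∈ B) then (1:ℝ) else 0) * ∏ u, wt r (c u)) := by
    rw [← Finset.sum_coe_sort]
    refine Finset.sum_congr rfl fun v _ => ?_
    rw [lam_sum hr.1.le hr.2.le R _ (Piv_dep hB v)]
    refine Finset.sum_congr rfl fun c _ => ?_
    have : flip1 (v : V) (ext0 R c) = ext0 R (flip1 v c) := by
      funext u
      by_cases huv : u = v
      · subst huv; simp [flip1, ext0]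
      · by_cases hu : u ∈ R
        · have : (⟨u, hu⟩ : R) ≠ v := fun h => huv (congrArg Subtype.val h)
          simp [flip1, ext0, huv, hu, this]
        · simp [flip1, ext0, huv, hu]
    simp only [Piv, Set.mem_ofPred_eq, this]
  rw [hval]
  refine h.congr_of_eventuallyEq ?_
  filter_upwards [Ioo_mem_nhds hr.1 hr.2] with s hs
  rw [lam_sum hs.1.le hs.2.le R B hB]

end DaC

open MeasureTheory ENNReal
namespace DaC

lemma rep_spec (η : EdgeCfg) (v : V) : Conn η v (clusterRep η v) ∧
    ∀ u, Conn η v u → Encodable.encode (clusterRep η v) ≤ Encodable.encode u := by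
  have hne : (Encodable.encode '' pCluster η v).Nonempty :=
    ⟨_, v, Relation.ReflTransGen.refl, rfl⟩
  obtain ⟨w, hw, hwe⟩ := Nat.sInf_mem hne
  have hrep : clusterRep η v = w := by
    unfold clusterRep
    rw [← hwe, Encodable.encodek]; rfl
  rw [hrep]
  refine ⟨hw, fun u hu => ?_⟩
  rw [hwe]
  exact Nat.sInf_le ⟨u, hu, rfl⟩

lemma rep_eq_iff (η : EdgeCfg) (v w : V) : clusterRep η v = w ↔ Conn η v w ∧
    ∀ u, Conn η v u → Encodable.encode w ≤ Encodable.encode u := by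
  constructor
  · rintro rfl; exact rep_spec η v
  · rintro ⟨h1, h2⟩
    have := rep_spec η v
    exact Encodable.encode_injective (le_antisymm (this.2 _ h1) (h2 _ this.1))

lemma measurableSet_conn (u v : V) : MeasurableSet {η : EdgeCfg | Conn η u v} := by
  let S : ℕ → V → Set EdgeCfg := fun n => Nat.rec (fun v => {_η | u = v})
    (fun _ T v => ⋃ w, T w ∩ {η | η w v = true}) n
  have hS : ∀ n v, MeasurableSet (S n v) := by
    intro n
    induction n with
    | zero => intro v; exact MeasurableSet.const _
    | succ n ih =>
      intro v
      refine MeasurableSet.iUnion fun w => (ih w).inter ?_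
      have h1 : Measurable (fun η : EdgeCfg => η w v) :=
        (measurable_pi_apply v).comp (measurable_pi_apply w)
      exact h1 (measurableSet_singleton true)
  have : {η : EdgeCfg | Conn η u v} = ⋃ n, S n v := by
    ext η
    simp only [Set.mem_ofPred_eq, Set.mem_iUnion]
    constructor
    · intro h
      induction h with
      | refl => exact ⟨0, rfl⟩
      | tail _ h2 ih =>
        obtain ⟨n, hn⟩ := ih
        exact ⟨n + 1, Set.mem_iUnion.2 ⟨_, hn, h2⟩⟩
    · rintro ⟨n, hn⟩
      induction n generalizing v with
      | zero => 
        have : u = v := hn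
        rw [this]; exact Relation.ReflTransGen.refl
      | succ n ih =>
        obtain ⟨w, hw, h2⟩ := Set.mem_iUnion.1 hn
        exact Relation.ReflTransGen.tail (ih w hw) h2
  rw [this]
  exact MeasurableSet.iUnion fun n => hS n v

lemma measurable_rep (v : V) : Measurable (fun η : EdgeCfg => clusterRep η v) := by
  refine measurable_to_countable' fun w => ?_
  have : (fun η : EdgeCfg => clusterRep η v) ⁻¹' {w} = {η | Conn η v w} ∩
      ⋂ u, ({η | Conn η v u}ᶜ ∪ {_η | Encodable.encode w ≤ Encodable.encode u}) := by
    ext η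
    simp [rep_eq_iff, imp_iff_not_or]
  rw [this]
  exact (measurableSet_conn v w).inter (MeasurableSet.iInter fun u =>
    (measurableSet_conn v u).compl.union (MeasurableSet.const _))

/-- colouring map -/
noncomputable def paint (r : ℝ) (q : EdgeCfg × (V → ℝ)) : Config :=
  (q.1, fun v => thr r q.2 (clusterRep q.1 v))

lemma measurable_eval_countable : Measurable (fun q : V × (V → Bool) => q.2 q.1) :=
  measurable_from_prod_countable_right fun v => measurable_pi_apply v

lemma measurable_paint (r : ℝ) : Measurable (paint r) := by
  refine measurable_fst.prodMk (measurable_pi_iff.2 fun v => ?_)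
  exact measurable_eval_countable.comp
    (((measurable_rep v).comp measurable_fst).prodMk ((measurable_thr r).comp measurable_snd))

lemma measurable_pair (p : ℝ) :
    Measurable (fun x => (edgeCfg SqAdj p x, fun v => vtxU v x)) :=
  (map_edge_vtx p).1.prodMk (measurable_pi_iff.2 fun _ => measurable_unif _)

lemma DaC_eq (p r : ℝ) : DaCMeasure SqAdj p r =
    ((base.map (edgeCfg SqAdj p)).prod lam).map (paint r) := by
  rw [lam, ← (map_edge_vtx p).2, Measure.map_map (measurable_paint r) (measurable_pair p)]
  rfl

/-- symmetric edge configurations -/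
def Sym (η : EdgeCfg) : Prop := ∀ u v, η u v = η v u

lemma sym_edgeCfg (p x : ℝ) : Sym (edgeCfg SqAdj p x) := by
  intro u v
  have h1 : SqAdj u v ↔ SqAdj v u := by
    unfold SqAdj
    rw [← neg_sub v.1, ← neg_sub v.2, neg_sq, neg_sq]
  have h2 : eIdx u v = eIdx v u := min_comm _ _
  simp only [edgeCfg, edgeU, h1, h2]

lemma measurableSet_sym : MeasurableSet {η | Sym η} := by
  have : {η | Sym η} = ⋂ u, ⋂ v, {η : EdgeCfg | η u v = η v u} := by ext; simp [Sym]
  rw [this]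
  refine MeasurableSet.iInter fun u => MeasurableSet.iInter fun v => ?_
  exact measurableSet_eq_fun ((measurable_pi_apply v).comp (measurable_pi_apply u))
    ((measurable_pi_apply u).comp (measurable_pi_apply v))

lemma Sym.conn {η : EdgeCfg} (h : Sym η) {u v : V} (hc : Conn η u v) : Conn η v u := by
  induction hc with
  | refl => exact Relation.ReflTransGen.refl
  | tail _ h2 ih => exact Relation.ReflTransGen.head (by rw [h]; exact h2) ih

lemma Sym.rep_congr {η : EdgeCfg} (h : Sym η) {u v : V} (hc : Conn η u v) :
    clusterRep η u = clusterRep η v := by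
  rw [rep_eq_iff]
  have := rep_spec η v
  exact ⟨hc.trans this.1, fun w hw => this.2 w ((h.conn hc).trans hw)⟩

lemma Sym.rep_rep {η : EdgeCfg} (h : Sym η) (v : V) :
    clusterRep η (clusterRep η v) = clusterRep η v :=
  (h.rep_congr (rep_spec η v).1).symm

lemma Sym.mem_cluster {η : EdgeCfg} (h : Sym η) {u v : V} :
    u ∈ pCluster η v ↔ clusterRep η u = clusterRep η v := by
  constructor
  · intro hc; exact (h.rep_congr hc).symm
  · intro he
    have h1 := (rep_spec η v).1
    rw [← he] at h1
    exact h1.trans (h.conn (rep_spec η u).1)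

/-- set of pivotal representatives -/
def pivReps (A : Set Config) (ω : Config) : Set V :=
  {v | clusterRep ω.1 v = v ∧ ¬ (ω ∈ A ↔ (ω.1, flipOn (pCluster ω.1 v) ω.2) ∈ A)}

lemma numPivotal_eq (A : Set Config) (ω : Config) (h : Sym ω.1) :
    numPivotal A ω = (pivReps A ω).encard := by
  unfold numPivotal
  have : {C : Set V | IsPivotal A ω C} = pCluster ω.1 '' pivReps A ω := by
    ext C
    simp only [Set.mem_ofPred_eq, IsPivotal, Set.mem_image, pivReps]
    constructor
    · rintro ⟨⟨v, rfl⟩, hp⟩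
      have hc : pCluster ω.1 (clusterRep ω.1 v) = pCluster ω.1 v := by
        ext u; rw [h.mem_cluster, h.mem_cluster, h.rep_rep]
      exact ⟨clusterRep ω.1 v, ⟨h.rep_rep v, by rwa [hc]⟩, hc⟩
    · rintro ⟨v, ⟨_, hp⟩, rfl⟩
      exact ⟨⟨v, rfl⟩, hp⟩
  rw [this, Set.InjOn.encard_image]
  rintro u ⟨hu, _⟩ v ⟨hv, _⟩ huv
  have : u ∈ pCluster ω.1 v := by rw [← huv]; exact Relation.ReflTransGen.refl
  rw [h.mem_cluster, hu, hv] at this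
  exact this

/-- measurable version of the number of pivotal clusters -/
noncomputable def gPiv (A : Set Config) (ω : Config) : ℝ≥0∞ :=
  ∑' v : V, (pivReps A ω).indicator 1 v

lemma numPivotal_eq_gPiv (A : Set Config) (ω : Config) (h : Sym ω.1) :
    numPivotal A ω = gPiv A ω := by
  rw [numPivotal_eq A ω h, gPiv, ← tsum_subtype (pivReps A ω) 1]
  exact (ENNReal.tsum_set_one _).symm

lemma measurableSet_A {W : Set V} (hW : W.Finite) {A : Set Config}
    (hAdep : DependsOnColoursIn A W) : MeasurableSet A := by
  have := hW.to_subtype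
  let f : Config → (W → Bool) := fun ω v => ω.2 v
  have hf : Measurable f := measurable_pi_iff.2 fun v => (measurable_pi_apply _).comp measurable_snd
  have : A = f ⁻¹' (f '' A) := by
    ext ω
    constructor
    · intro h; exact ⟨ω, h, rfl⟩
    · rintro ⟨ω', h, he⟩
      exact (hAdep ω' ω fun v hv => congrFun he ⟨v, hv⟩).1 h
  rw [this]
  exact hf (Set.toFinite _).measurableSet

lemma measurable_flip (v : V) :
    Measurable (fun ω : Config => ((ω.1, flipOn (pCluster ω.1 v) ω.2) : Config)) := by
  refine measurable_fst.prodMk (measurable_pi_iff.2 fun u => ?_)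
  have hc : MeasurableSet {ω : Config | u ∈ pCluster ω.1 v} :=
    measurable_fst (measurableSet_conn v u)
  have h1 : Measurable (fun ω : Config => ω.2 u) := (measurable_pi_apply u).comp measurable_snd
  exact Measurable.ite hc ((Measurable.of_discrete (f := fun b : Bool => !b)).comp h1) h1

lemma measurable_gPiv {A : Set Config} (hA : MeasurableSet A) : Measurable (gPiv A) := by
  refine Measurable.tsum fun v => ?_
  have hs : MeasurableSet {ω : Config | v ∈ pivReps A ω} := by
    have h1 : MeasurableSet {ω : Config | clusterRep ω.1 v = v} :=
      ((measurable_rep v).comp measurable_fst) (measurableSet_singleton v)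
    have h2 := measurable_flip v hA
    have : MeasurableSet (symmDiff A ((fun ω : Config => ((ω.1, flipOn (pCluster ω.1 v) ω.2) : Config)) ⁻¹' A)) :=
      hA.symmDiff h2
    convert h1.inter this using 1
    ext ω
    simp only [Set.mem_symmDiff, Set.mem_preimage, Set.mem_inter_iff, pivReps, Set.mem_ofPred_eq]
    tauto
  exact (measurable_const (a := (1:ℝ≥0∞))).indicator hs

/-- induced site event -/
def siteEv (A : Set Config) (η : EdgeCfg) : Set (V → Bool) :=
  {z | (η, fun v => z (clusterRep η v)) ∈ A}

open Classical in
lemma siteEv_dep {W : Set V} (hW : W.Finite) {A : Set Config}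
    (hAdep : DependsOnColoursIn A W) (η : EdgeCfg) :
    DepOn (siteEv A η) (hW.toFinset.image (clusterRep η)) := by
  intro z z' h
  refine hAdep _ _ fun v hv => h _ ?_
  exact Finset.mem_image_of_mem _ (by simpa using hv)

lemma siteEv_inc {A : Set Config} (hAinc : IncreasingColourEvent A) (η : EdgeCfg) :
    ∀ z z' : V → Bool, (∀ v, z v = true → z' v = true) → z ∈ siteEv A η → z' ∈ siteEv A η :=
  fun _ _ h hz => hAinc _ _ (fun _ => h _) hz

lemma pivReps_paint {A : Set Config} {η : EdgeCfg} (h : Sym η) (r : ℝ) (y : V → ℝ) (v : V) :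
    v ∈ pivReps A (paint r (η, y)) ↔ clusterRep η v = v ∧ thr r y ∈ Piv (siteEv A η) v := by
  show (clusterRep η v = v ∧ _) ↔ _
  refine and_congr_right fun hv => ?_
  have : flipOn (pCluster η v) (fun u => thr r y (clusterRep η u)) =
      fun u => flip1 v (thr r y) (clusterRep η u) := by
    funext u
    simp only [flipOn, h.mem_cluster, hv, flip1]
    by_cases hu : clusterRep η u = v <;> simp [hu]
  simp only [Piv, siteEv, Set.mem_ofPred_eq, paint, this]

open Classical in
lemma lintegral_gPiv {W : Set V} (hW : W.Finite) {A : Set Config}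
    (hAdep : DependsOnColoursIn A W) {η : EdgeCfg} (h : Sym η) (r : ℝ) :
    ∫⁻ y, gPiv A (paint r (η, y)) ∂lam =
      ∑ v ∈ hW.toFinset.image (clusterRep η), lam {y | thr r y ∈ Piv (siteEv A η) v} := by
  have hA := measurableSet_A hW hAdep
  have hdep := siteEv_dep hW hAdep η
  have hmB : MeasurableSet (siteEv A η) := by
    have : Measurable (fun z : V → Bool => ((η, fun v => z (clusterRep η v)) : Config)) :=
      measurable_const.prodMk (measurable_pi_iff.2 fun v => measurable_pi_apply _)
    exact this hA
  have hmP : ∀ v, MeasurableSet {y | thr r y ∈ Piv (siteEv A η) v} := by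
    intro v
    have hfl : Measurable (flip1 v : (V → Bool) → V → Bool) := by
      refine measurable_pi_iff.2 fun u => ?_
      by_cases hu : u = v
      · subst hu
        simp only [flip1, Function.update_self]
        exact (Measurable.of_discrete (f := fun b : Bool => !b)).comp (measurable_pi_apply u)
      · simp only [flip1, Function.update_of_ne hu]
        exact measurable_pi_apply u
    refine measurable_thr r ?_
    have : MeasurableSet (symmDiff (siteEv A η) (flip1 v ⁻¹' siteEv A η)) :=
      hmB.symmDiff (hfl hmB)
    convert this using 1
    ext ω
    simp only [Set.mem_symmDiff, Set.mem_preimage, Piv, Set.mem_ofPred_eq]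
    tauto
  have key : ∀ y, gPiv A (paint r (η, y)) =
      ∑ v ∈ hW.toFinset.image (clusterRep η),
        {y | thr r y ∈ Piv (siteEv A η) v}.indicator (fun _ => (1:ℝ≥0∞)) y := by
    intro y
    rw [gPiv, tsum_eq_sum (s := hW.toFinset.image (clusterRep η))]
    · refine Finset.sum_congr rfl fun v hv => ?_
      obtain ⟨w, _, rfl⟩ := Finset.mem_image.1 hv
      simp only [Set.indicator_apply, pivReps_paint h, h.rep_rep, true_and, Set.mem_ofPred_eq]
      rfl
    · intro v hv
      rw [Set.indicator_of_notMem]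
      rw [pivReps_paint h, Piv_empty hdep hv]
      simp
  simp_rw [key]
  rw [lintegral_finsetSum _ (fun v _ => (measurable_const.indicator (hmP v)))]
  refine Finset.sum_congr rfl fun v _ => ?_
  rw [lintegral_indicator (hmP v)]; simp

end DaC

namespace DaC

/-- **Russo's formula for the DaC model.** If `A` is an increasing event
depending only on the colours of the vertices of a finite set `W`, then for
every `r ∈ (0,1)` the function `r ↦ ℙ_{p,r}(A)` is differentiable at `r` with
derivative the expected number of pivotal `p`-clusters. -/
theorem russo_formula (p : ℝ) (hp0 : 0 ≤ p) (hp1 : p ≤ 1)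
    (W : Set V) (hW : W.Finite)
    (A : Set Config) (hAinc : IncreasingColourEvent A)
    (hAdep : DependsOnColoursIn A W)
    (r : ℝ) (hr : r ∈ Set.Ioo (0 : ℝ) 1) :
    HasDerivAt (fun r' : ℝ => (DaCMeasure SqAdj p r' A).toReal)
      ((∫⁻ ω, numPivotal A ω ∂(DaCMeasure SqAdj p r)).toReal) r := by
  classical
  have hA := measurableSet_A hW hAdep
  have hE := (map_edge_vtx p).1
  have hFm : ∀ s, Measurable fun x => lam {y | thr s y ∈ siteEv A (edgeCfg SqAdj p x)} := fun s =>
    (measurable_measure_prodMk_left (ν := lam) (measurable_paint s hA)).comp hE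
  have hP : ∀ s, (DaCMeasure SqAdj p s A).toReal =
      ∫ x, lam.real {y | thr s y ∈ siteEv A (edgeCfg SqAdj p x)} ∂base := by
    intro s
    rw [DaC_eq, Measure.map_apply (measurable_paint s) hA,
      Measure.prod_apply (measurable_paint s hA),
      lintegral_map (measurable_measure_prodMk_left (measurable_paint s hA)) hE]
    exact (integral_toReal (hFm s).aemeasurable (ae_of_all _ fun x => measure_lt_top _ _)).symm
  have hGm : ∀ s, Measurable fun x => ∫⁻ y, gPiv A (paint s (edgeCfg SqAdj p x, y)) ∂lam := fun s =>
    (Measurable.lintegral_prod_right' (ν := lam)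
      ((measurable_gPiv hA).comp (measurable_paint s))).comp hE
  have hG : ∀ s x, ∫⁻ y, gPiv A (paint s (edgeCfg SqAdj p x, y)) ∂lam =
      ∑ v ∈ hW.toFinset.image (clusterRep (edgeCfg SqAdj p x)),
        lam {y | thr s y ∈ Piv (siteEv A (edgeCfg SqAdj p x)) v} := fun s x =>
    lintegral_gPiv hW hAdep (sym_edgeCfg p x) s
  have hGle : ∀ s x, ∫⁻ y, gPiv A (paint s (edgeCfg SqAdj p x, y)) ∂lam ≤ (hW.toFinset.card : ℝ≥0∞) := by
    intro s x
    rw [hG]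
    calc _ ≤ ∑ v ∈ hW.toFinset.image (clusterRep (edgeCfg SqAdj p x)), (1:ℝ≥0∞) :=
          Finset.sum_le_sum fun v _ => prob_le_one
      _ ≤ _ := by simpa using Finset.card_image_le
  have hN : (∫⁻ ω, numPivotal A ω ∂(DaCMeasure SqAdj p r)).toReal =
      ∫ x, (∫⁻ y, gPiv A (paint r (edgeCfg SqAdj p x, y)) ∂lam).toReal ∂base := by
    have hae : numPivotal A =ᵐ[DaCMeasure SqAdj p r] gPiv A := by
      have hs : ∀ᵐ ω ∂(DaCMeasure SqAdj p r), Sym ω.1 := by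
        have hm : MeasurableSet {ω : Config | Sym ω.1} := measurable_fst measurableSet_sym
        have hm2 : Measurable (fun x => (edgeCfg SqAdj p x, colourCfg SqAdj p r x)) :=
          (measurable_paint r).comp (measurable_pair p)
        rw [DaCMeasure, ae_map_iff hm2.aemeasurable hm]
        exact ae_of_all _ fun x => sym_edgeCfg p x
      filter_upwards [hs] with ω hω
      exact numPivotal_eq_gPiv A ω hω
    have hgm : Measurable (fun q => gPiv A (paint r q)) := (measurable_gPiv hA).comp (measurable_paint r)
    rw [lintegral_congr_ae hae, DaC_eq, lintegral_map (measurable_gPiv hA) (measurable_paint r),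
      lintegral_prod _ hgm.aemeasurable,
      lintegral_map (Measurable.lintegral_prod_right' hgm) hE]
    exact (integral_toReal (hGm r).aemeasurable
      (ae_of_all _ fun x => (hGle r x).trans_lt (ENNReal.natCast_lt_top _))).symm
  rw [hN]
  simp_rw [hP]
  refine (hasDerivAt_integral_of_dominated_loc_of_deriv_le (μ := base)
    (F := fun s x => lam.real {y | thr s y ∈ siteEv A (edgeCfg SqAdj p x)})
    (F' := fun s x => (∫⁻ y, gPiv A (paint s (edgeCfg SqAdj p x, y)) ∂lam).toReal)
    (s := Set.Ioo 0 1) (bound := fun _ => (hW.toFinset.card : ℝ)) (Ioo_mem_nhds hr.1 hr.2)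
    ?_ ?_ ?_ ?_ ?_ ?_).2
  · exact Filter.Eventually.of_forall fun s => (hFm s).ennreal_toReal.aestronglyMeasurable
  · refine Integrable.of_bound (hFm r).ennreal_toReal.aestronglyMeasurable 1 (ae_of_all _ fun x => ?_)
    rw [Real.norm_eq_abs, abs_of_nonneg measureReal_nonneg]
    exact measureReal_le_one
  · exact (hGm r).ennreal_toReal.aestronglyMeasurable
  · refine ae_of_all _ fun x s _ => ?_
    rw [Real.norm_eq_abs, abs_of_nonneg ENNReal.toReal_nonneg]
    simpa using ENNReal.toReal_mono (ENNReal.natCast_ne_top _) (hGle s x)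
  · exact integrable_const _
  · refine ae_of_all _ fun x s hs => ?_
    have := russo_lam hs _ _ (siteEv_dep hW hAdep (edgeCfg SqAdj p x)) (siteEv_inc hAinc _)
    rw [hG, ENNReal.toReal_sum (fun _ _ => measure_ne_top _ _)]
    exact this

end DaC
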